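/- Let (p, F) be a generating pair, let α be a nonempty finite string over [N], and let θ = ᾱ = ααα⋯ be the periodic infinite string with period α. Then f_{−α} is a self-similarity of T(θ): f_{−α} is a similitude of ℝ² with ratio s^{−e(α)} > 1, and for every tile t ∈ T(θ), the set f_{−α}(t) equals the union of those tiles of T(θ) that are contained in f_{−α}(t), and these tiles have pairwise disjoint interiors. -/

import Mathlib

/-! The tiling is the increasing union of the patches `T(θ,k)`, because prepending `θ_{k+1}` to a
string of `S_{e(θ|k)}` gives a string of `S_{e(θ|k+1)}` that defines the same tile
(`patch_subset_succ`).

Since `αθ = θ`, we have `θ|(k+|α|) = α (θ|k)`, so `f_{-α}` carries the tile `t(θ,k,σ)` to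
`f_{-(θ|(k+|α|))} (f_σ p)`. As `e⁻(σ) < e(θ|k) ≤ e(θ|(k+|α|))`, the string `σ` can be prolonged,
letter by letter through `p = ⋃ f_n(p)`, to strings of `S_{e(θ|(k+|α|))}`; the corresponding tiles
of `T(θ,k+|α|)` lie in `f_{-α}(t)` and cover it (`exists_append_mem_Sset`).

For disjointness, any two tiles lie in a common patch. Distinct strings of `S_n` are incomparable
for the prefix order (`not_prefix_of_mem_Sset`), hence differ at a first letter, where the
disjointness of the interiors of the `f_n(p)` applies (`interior_disjoint_of_not_prefix`). -/

open Set

noncomputable section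

abbrev Pt := EuclideanSpace ℝ (Fin 2)

/-- A similitude of the plane with scaling ratio `r`. -/
def IsSimilitude (f : Pt → Pt) (r : ℝ) : Prop :=
  Function.Bijective f ∧ ∀ x y, dist (f x) (f y) = r * dist x y

/-- `e(σ) = a_{σ₁} + ⋯ + a_{σ_k}` for a finite string `σ` over `[N]`. -/
def estr {N : ℕ} (a : Fin N → ℕ) (σ : List (Fin N)) : ℕ := (σ.map a).sum

/-- `e⁻(σ) = e(σ) - a_{σ_k}` (the sum over all but the last letter). -/
def eminus {N : ℕ} (a : Fin N → ℕ) (σ : List (Fin N)) : ℕ := estr a σ.dropLast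

/-- `f_σ = f_{σ₁} ∘ f_{σ₂} ∘ ⋯ ∘ f_{σ_k}`. -/
def fstr {N : ℕ} (f : Fin N → Pt → Pt) (σ : List (Fin N)) : Pt → Pt :=
  σ.foldr (fun i g => f i ∘ g) id

/-- `f_{-σ} = f_{σ₁}⁻¹ ∘ f_{σ₂}⁻¹ ∘ ⋯ ∘ f_{σ_k}⁻¹`. -/
def fneg {N : ℕ} (f : Fin N → Pt → Pt) (σ : List (Fin N)) : Pt → Pt :=
  σ.foldr (fun i g => Function.invFun (f i) ∘ g) id

/-- `S_n` = nonempty finite strings `σ` with `e(σ) ≥ n > e⁻(σ)`. -/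
def Sset {N : ℕ} (a : Fin N → ℕ) (n : ℕ) : Set (List (Fin N)) :=
  {σ | σ ≠ [] ∧ n ≤ estr a σ ∧ eminus a σ < n}

/-- `θ|k = θ₁θ₂⋯θ_k` (we index infinite strings from 0, so `θ|k = θ 0, …, θ (k-1)`). -/
def trunc {N : ℕ} (θ : ℕ → Fin N) (k : ℕ) : List (Fin N) :=
  (List.range k).map θ

/-- The tile `t(θ,k,σ) = (f_{-(θ|k)} ∘ f_σ)(p)`. -/
def tile {N : ℕ} (f : Fin N → Pt → Pt) (p : Set Pt) (θ : ℕ → Fin N) (k : ℕ)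
    (σ : List (Fin N)) : Set Pt :=
  (fneg f (trunc θ k) ∘ fstr f σ) '' p

/-- The patch `T(θ,k) = { t(θ,k,σ) : σ ∈ S_{e(θ|k)} }`. -/
def patch {N : ℕ} (a : Fin N → ℕ) (f : Fin N → Pt → Pt) (p : Set Pt) (θ : ℕ → Fin N)
    (k : ℕ) : Set (Set Pt) :=
  tile f p θ k '' Sset a (estr a (trunc θ k))

/-- The tiling `T(θ) = ⋃_{k ≥ 1} T(θ,k)`. -/
def tiling {N : ℕ} (a : Fin N → ℕ) (f : Fin N → Pt → Pt) (p : Set Pt)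
    (θ : ℕ → Fin N) : Set (Set Pt) :=
  ⋃ k ∈ {k : ℕ | 1 ≤ k}, patch a f p θ k

/-- Concatenation of a finite string `α` with an infinite string `θ`. -/
def cat {N : ℕ} (α : List (Fin N)) (θ : ℕ → Fin N) : ℕ → Fin N :=
  fun i => if h : i < α.length then α.get ⟨i, h⟩ else θ (i - α.length)

/-- A generating pair `(p, F)` with data `a₁,…,a_N` and scaling number `s`. -/
structure GenPair (N : ℕ) (a : Fin N → ℕ) (s : ℝ) (p : Set Pt)
    (f : Fin N → Pt → Pt) : Prop where
  two_le : 2 ≤ N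
  a_pos : ∀ n, 0 < a n
  a_gcd : Finset.univ.gcd a = 1
  s_pos : 0 < s
  s_lt_one : s < 1
  s_eq : ∑ n, s ^ (2 * a n) = 1
  p_nonempty : p.Nonempty
  p_compact : IsCompact p
  p_closure : p = closure (interior p)
  sim : ∀ n, IsSimilitude (f n) (s ^ a n)
  cover : p = ⋃ n, f n '' p
  disj : ∀ m n, m ≠ n → interior (f m '' p) ∩ interior (f n '' p) = ∅

/-! ### Similitudes -/

lemma IsSimilitude.id : IsSimilitude id 1 :=
  ⟨Function.bijective_id, fun x y => by simp⟩

lemma IsSimilitude.comp {f g : Pt → Pt} {r q : ℝ} (hf : IsSimilitude f r)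
    (hg : IsSimilitude g q) : IsSimilitude (f ∘ g) (r * q) :=
  ⟨hf.1.comp hg.1, fun x y => by simp [hf.2, hg.2, mul_assoc]⟩

lemma IsSimilitude.invFun {f : Pt → Pt} {r : ℝ} (hr : 0 < r) (hf : IsSimilitude f r) :
    IsSimilitude (Function.invFun f) r⁻¹ := by
  have hl := Function.leftInverse_invFun hf.1.1
  have hri := Function.rightInverse_invFun hf.1.2
  refine ⟨⟨hri.injective, hl.surjective⟩, fun x y => ?_⟩
  have h := hf.2 (Function.invFun f x) (Function.invFun f y)
  rw [hri x, hri y] at h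
  rw [h, inv_mul_cancel_left₀ hr.ne']

lemma IsSimilitude.interior_image {f : Pt → Pt} {r : ℝ} (hr : 0 < r) (hf : IsSimilitude f r)
    (A : Set Pt) : interior (f '' A) = f '' interior A := by
  have he : Topology.IsEmbedding f :=
    Dilation.isEmbedding (Dilation.mkOfDistEq f
      ⟨⟨r, hr.le⟩, fun h => hr.ne' (congrArg NNReal.toReal h), hf.2⟩)
  have hh : IsHomeomorph f := isHomeomorph_iff_isEmbedding_surjective.2 ⟨he, hf.1.2⟩
  exact (hh.homeomorph.image_interior A).symm

lemma IsSimilitude.interior_disjoint {f : Pt → Pt} {r : ℝ} (hr : 0 < r) (hf : IsSimilitude f r)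
    {A B : Set Pt} (h : interior A ∩ interior B = ∅) :
    interior (f '' A) ∩ interior (f '' B) = ∅ := by
  rw [hf.interior_image hr, hf.interior_image hr, ← image_inter hf.1.1, h, image_empty]

/-! ### Strings -/

section Strings

variable {N : ℕ} {a : Fin N → ℕ} {s : ℝ} {p : Set Pt} {f : Fin N → Pt → Pt}

lemma estr_append (σ τ : List (Fin N)) : estr a (σ ++ τ) = estr a σ + estr a τ := by
  simp [estr]

lemma fstr_append (σ τ : List (Fin N)) : fstr f (σ ++ τ) = fstr f σ ∘ fstr f τ := by
  induction σ with
  | nil => rfl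
  | cons i σ ih =>
    change f i ∘ fstr f (σ ++ τ) = f i ∘ fstr f σ ∘ fstr f τ
    rw [ih]

lemma fneg_append (σ τ : List (Fin N)) : fneg f (σ ++ τ) = fneg f σ ∘ fneg f τ := by
  induction σ with
  | nil => rfl
  | cons i σ ih =>
    change Function.invFun (f i) ∘ fneg f (σ ++ τ) =
      Function.invFun (f i) ∘ fneg f σ ∘ fneg f τ
    rw [ih]

lemma trunc_succ (θ : ℕ → Fin N) (k : ℕ) : trunc θ (k + 1) = trunc θ k ++ [θ k] := by
  simp [trunc, List.range_succ]

lemma trunc_cat (α : List (Fin N)) (θ : ℕ → Fin N) (k : ℕ) :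
    trunc (cat α θ) (α.length + k) = α ++ trunc θ k := by
  apply List.ext_getElem
  · simp [trunc]
  · intro i h₁ h₂
    by_cases hi : i < α.length
    · simp [trunc, cat, hi]
    · simp [trunc, cat, hi, List.getElem_append]

lemma not_prefix_of_mem_Sset {n : ℕ} {σ τ : List (Fin N)} (hσ : σ ∈ Sset a n)
    (hτ : τ ∈ Sset a n) (hne : σ ≠ τ) : ¬ σ <+: τ := by
  rintro ⟨ρ, rfl⟩
  have hρ : ρ ≠ [] := by
    rintro rfl
    simp at hne
  have h1 := hσ.2.1
  have h2 := hτ.2.2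
  rw [eminus, List.dropLast_append_of_ne_nil hρ, estr_append] at h2
  omega

/-! ### Generating pairs -/

lemma GenPair.pow_pos (h : GenPair N a s p f) (n : ℕ) : 0 < s ^ n := _root_.pow_pos h.s_pos n

lemma GenPair.sim_fstr (h : GenPair N a s p f) (σ : List (Fin N)) :
    IsSimilitude (fstr f σ) (s ^ estr a σ) := by
  induction σ with
  | nil => simpa [fstr, estr] using IsSimilitude.id
  | cons i σ ih => simpa [fstr, estr, pow_add] using (h.sim i).comp ih

lemma GenPair.sim_fneg (h : GenPair N a s p f) (σ : List (Fin N)) :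
    IsSimilitude (fneg f σ) (s ^ estr a σ)⁻¹ := by
  induction σ with
  | nil => simpa [fneg, estr] using IsSimilitude.id
  | cons i σ ih =>
    have := ((h.sim i).invFun (h.pow_pos _)).comp ih
    rw [← mul_inv, ← pow_add] at this
    simpa [fneg, estr] using this

lemma GenPair.image_subset (h : GenPair N a s p f) (i : Fin N) : f i '' p ⊆ p := by
  conv_rhs => rw [h.cover]
  exact subset_iUnion (fun n => f n '' p) i

lemma GenPair.fstr_image_subset (h : GenPair N a s p f) (σ : List (Fin N)) :
    fstr f σ '' p ⊆ p := by
  induction σ with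
  | nil => simp [fstr]
  | cons i σ ih =>
    change (f i ∘ fstr f σ) '' p ⊆ p
    rw [image_comp]
    exact (image_mono ih).trans (h.image_subset i)

/-- The pieces `f_{στ}(p)` with `στ ∈ S_n` cover `f_σ(p)`, provided `σ` does not overshoot level
`n` before its last letter. -/
lemma GenPair.exists_append_mem_Sset (h : GenPair N a s p f) (n : ℕ) (σ : List (Fin N))
    (hσ : σ ≠ []) (hn : eminus a σ < n) (x : Pt) (hx : x ∈ fstr f σ '' p) :
    ∃ τ, σ ++ τ ∈ Sset a n ∧ x ∈ fstr f (σ ++ τ) '' p := by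
  by_cases hle : n ≤ estr a σ
  · exact ⟨[], by simpa using ⟨hσ, hle, hn⟩, by simpa using hx⟩
  · obtain ⟨y, hy, rfl⟩ := hx
    rw [h.cover, mem_iUnion] at hy
    obtain ⟨i, z, hz, rfl⟩ := hy
    have hi := h.a_pos i
    have he : estr a (σ ++ [i]) = estr a σ + a i := by simp [estr]
    obtain ⟨τ, h1, h2⟩ := h.exists_append_mem_Sset n (σ ++ [i]) (by simp)
      (by rw [eminus, List.dropLast_concat]; omega) (fstr f σ (f i z))
      ⟨z, hz, by rw [fstr_append]; rfl⟩
    exact ⟨i :: τ, by simpa using h1, by simpa using h2⟩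
termination_by n - estr a σ
decreasing_by omega

lemma GenPair.interior_disjoint_of_not_prefix (h : GenPair N a s p f) (σ τ : List (Fin N))
    (h₁ : ¬ σ <+: τ) (h₂ : ¬ τ <+: σ) :
    interior (fstr f σ '' p) ∩ interior (fstr f τ '' p) = ∅ := by
  induction σ generalizing τ with
  | nil => simp at h₁
  | cons i σ ih =>
    cases τ with
    | nil => simp at h₂
    | cons j τ =>
      change interior ((f i ∘ fstr f σ) '' p) ∩ interior ((f j ∘ fstr f τ) '' p) = ∅
      rw [image_comp, image_comp]
      by_cases hij : i = j
      · subst hij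
        rw [List.cons_prefix_cons] at h₁ h₂
        exact (h.sim i).interior_disjoint (h.pow_pos _) (ih τ (by tauto) (by tauto))
      · apply subset_eq_empty _ (h.disj i j hij)
        exact inter_subset_inter
          (interior_mono (image_mono (h.fstr_image_subset σ)))
          (interior_mono (image_mono (h.fstr_image_subset τ)))

/-! ### Patches -/

lemma GenPair.patch_subset_succ (h : GenPair N a s p f) (θ : ℕ → Fin N) (k : ℕ) :
    patch a f p θ k ⊆ patch a f p θ (k + 1) := by
  rintro _ ⟨σ, ⟨h0, h1, h2⟩, rfl⟩
  refine ⟨θ k :: σ, ⟨by simp, ?_, ?_⟩, ?_⟩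
  · rw [trunc_succ, estr_append]
    simp only [estr, List.map_cons, List.sum_cons, List.map_nil, List.sum_nil] at h1 ⊢
    omega
  · rw [trunc_succ, estr_append]
    rw [eminus, List.dropLast_cons_of_ne_nil h0]
    simp only [eminus, estr, List.map_cons, List.sum_cons, List.map_nil, List.sum_nil] at h2 ⊢
    omega
  · have hl := Function.leftInverse_invFun (h.sim (θ k)).1.1
    have : fneg f (trunc θ (k + 1)) ∘ fstr f (θ k :: σ) = fneg f (trunc θ k) ∘ fstr f σ := by
      rw [trunc_succ, fneg_append]
      funext x
      exact congrArg (fneg f (trunc θ k)) (hl (fstr f σ x))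
    rw [tile, tile, this]

lemma GenPair.patch_mono (h : GenPair N a s p f) (θ : ℕ → Fin N) : Monotone (patch a f p θ) :=
  monotone_nat_of_le_succ (h.patch_subset_succ θ)

lemma GenPair.patch_disjoint (h : GenPair N a s p f) (θ : ℕ → Fin N) (k : ℕ) {t₁ t₂ : Set Pt}
    (h₁ : t₁ ∈ patch a f p θ k) (h₂ : t₂ ∈ patch a f p θ k) (hne : t₁ ≠ t₂) :
    interior t₁ ∩ interior t₂ = ∅ := by
  obtain ⟨σ, hσ, rfl⟩ := h₁
  obtain ⟨τ, hτ, rfl⟩ := h₂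
  have hστ : σ ≠ τ := fun e => hne (by rw [e])
  rw [tile, tile, image_comp, image_comp]
  exact (h.sim_fneg _).interior_disjoint (inv_pos.2 (h.pow_pos _))
    (h.interior_disjoint_of_not_prefix σ τ (not_prefix_of_mem_Sset hσ hτ hστ)
      (not_prefix_of_mem_Sset hτ hσ hστ.symm))

lemma mem_tiling {θ : ℕ → Fin N} {t : Set Pt} :
    t ∈ tiling a f p θ ↔ ∃ k, 1 ≤ k ∧ t ∈ patch a f p θ k := by
  simp [tiling]

end Strings

/-- if `θ = ᾱ` is periodic with period `α` (equivalently `αθ = θ`),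
then `f_{-α}` is a self-similarity of `T(θ)`: it is a similitude of ratio
`s^{-e(α)} > 1`, and the image of every tile is the union of the tiles of `T(θ)`
contained in it, these tiles having pairwise disjoint interiors. -/
theorem stmt_10 (N : ℕ) (a : Fin N → ℕ) (s : ℝ) (p : Set Pt) (f : Fin N → Pt → Pt)
    (hGP : GenPair N a s p f) (α : List (Fin N)) (hα : α ≠ [])
    (θ : ℕ → Fin N) (hθ : cat α θ = θ) :
    IsSimilitude (fneg f α) (s ^ estr a α)⁻¹ ∧ 1 < (s ^ estr a α)⁻¹ ∧
      ∀ t ∈ tiling a f p θ,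
        fneg f α '' t = ⋃₀ {t' ∈ tiling a f p θ | t' ⊆ fneg f α '' t} ∧
        ∀ t₁ ∈ {t' ∈ tiling a f p θ | t' ⊆ fneg f α '' t},
          ∀ t₂ ∈ {t' ∈ tiling a f p θ | t' ⊆ fneg f α '' t},
            t₁ ≠ t₂ → interior t₁ ∩ interior t₂ = ∅ := by
  have hα1 : estr a α ≠ 0 := by
    cases α with
    | nil => exact absurd rfl hα
    | cons i α =>
      have := hGP.a_pos i
      simp only [estr, List.map_cons, List.sum_cons]
      omega
  refine ⟨hGP.sim_fneg α, (one_lt_inv₀ (hGP.pow_pos _)).2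
    (pow_lt_one₀ hGP.s_pos.le hGP.s_lt_one hα1), fun t ht => ⟨?_, ?_⟩⟩
  · apply Subset.antisymm _ (sUnion_subset fun t' ht' => ht'.2)
    obtain ⟨k, hk, σ, ⟨h0, -, h2⟩, rfl⟩ := mem_tiling.1 ht
    have htr : trunc θ (α.length + k) = α ++ trunc θ k := by
      conv_lhs => rw [← hθ]
      exact trunc_cat α θ k
    have himg : ∀ A : Set Pt,
        fneg f α '' (fneg f (trunc θ k) '' A) = fneg f (trunc θ (α.length + k)) '' A := by
      intro A
      rw [htr, fneg_append, image_comp]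
    rw [tile, image_comp, himg]
    rintro _ ⟨x, hx, rfl⟩
    obtain ⟨τ, hτ, hxτ⟩ := hGP.exists_append_mem_Sset (estr a (trunc θ (α.length + k))) σ h0
      (by rw [htr, estr_append]; omega) x hx
    refine ⟨tile f p θ (α.length + k) (σ ++ τ),
      ⟨mem_tiling.2 ⟨α.length + k, by omega, σ ++ τ, hτ, rfl⟩, ?_⟩, ?_⟩
    · rw [tile, image_comp, fstr_append, image_comp]
      exact image_mono (image_mono (hGP.fstr_image_subset τ))
    · rw [tile, image_comp]
      exact mem_image_of_mem _ hxτ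
  · rintro t₁ ⟨h₁, -⟩ t₂ ⟨h₂, -⟩ hne
    obtain ⟨k₁, -, h₁⟩ := mem_tiling.1 h₁
    obtain ⟨k₂, -, h₂⟩ := mem_tiling.1 h₂
    exact hGP.patch_disjoint θ (max k₁ k₂) (hGP.patch_mono θ (le_max_left _ _) h₁)
      (hGP.patch_mono θ (le_max_right _ _) h₂) hne
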